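/- Let V₀, V₀' be coisotropic subspaces of V of the same dimension, with V₁ = V₀^⊥ and V₁' = (V₀')^⊥. Then there is a bijection between linear Lagrangian relations L on V with p₁(L) = V₀ and p₂(L) = V₀', and isometries V₀/V₁ → V₀'/V₁' (with respect to the induced nondegenerate forms on the quotients). -/

import Mathlib

open Module Submodule

variable {V : Type} [AddCommGroup V] [Module ℂ V]

/-- The form `B((v,w),(v',w')) = ⟨v|v'⟩ − ⟨w|w'⟩` on `V × V`. -/
noncomputable def BB (b : LinearMap.BilinForm ℂ V) : LinearMap.BilinForm ℂ (V × V) :=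
  LinearMap.mk₂ ℂ (fun p q => b p.1 q.1 - b p.2 q.2)
    (by intros; simp; ring)
    (by intros; simp; ring)
    (by intros; simp; ring)
    (by intros; simp; ring)

/-- A linear relation `L ⊆ V × V` is isotropic if `B` vanishes on it. -/
def IsIsotropicRel (b : LinearMap.BilinForm ℂ V) (L : Submodule ℂ (V × V)) : Prop :=
  ∀ p ∈ L, ∀ q ∈ L, BB b p q = 0

/-- A linear Lagrangian relation: an isotropic subspace of `V × V` of dimension `dim V`. -/
def IsLagrangianRel [FiniteDimensional ℂ V] (b : LinearMap.BilinForm ℂ V)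
    (L : Submodule ℂ (V × V)) : Prop :=
  IsIsotropicRel b L ∧ finrank ℂ L = finrank ℂ V

/-- Composition of linear relations: `rcomp L L' = L' ∘ L = {(x,z) | ∃ y, (x,y) ∈ L, (y,z) ∈ L'}`. -/
def rcomp (L L' : Submodule ℂ (V × V)) : Submodule ℂ (V × V) where
  carrier := {p | ∃ y, (p.1, y) ∈ L ∧ (y, p.2) ∈ L'}
  add_mem' := fun ⟨y, h1, h2⟩ ⟨y', h1', h2'⟩ => ⟨y + y', L.add_mem h1 h1', L'.add_mem h2 h2'⟩
  zero_mem' := ⟨0, L.zero_mem, L'.zero_mem⟩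
  smul_mem' := fun c p ⟨y, h1, h2⟩ => ⟨c • y, L.smul_mem c h1, L'.smul_mem c h2⟩


theorem BB_app {V : Type} [AddCommGroup V] [Module ℂ V] (b : LinearMap.BilinForm ℂ V)
    (p q : V × V) : BB b p q = b p.1 q.1 - b p.2 q.2 := rfl

theorem lag_max {V : Type} [AddCommGroup V] [Module ℂ V] [FiniteDimensional ℂ V]
    (b : LinearMap.BilinForm ℂ V) (hsymm : b.IsSymm) (hnd : b.Nondegenerate)
    (L : Submodule ℂ (V × V)) (hL : IsLagrangianRel b L) (u : V × V)
    (hu : ∀ p ∈ L, BB b p u = 0) : u ∈ L := by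
  have hs : (BB b).IsSymm := ⟨fun x y => by
    simp only [BB_app]; rw [hsymm.eq x.1 y.1, hsymm.eq x.2 y.2]⟩
  have hn : (BB b).Nondegenerate := by
    refine hs.isRefl.nondegenerate_iff_separatingLeft.2 ?_
    rintro ⟨x, y⟩ h
    have h1 : x = 0 := hnd.1 x fun z => by simpa [BB_app] using h (z, 0)
    have h2 : y = 0 := hnd.1 y fun z => by simpa [BB_app] using h (0, z)
    simp [h1, h2]
  have hle : L ≤ (BB b).orthogonal L := fun q hq p hp => hL.1 p hp q hq
  have hf := LinearMap.BilinForm.finrank_orthogonal hn L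
  have he : L = (BB b).orthogonal L := by
    apply Submodule.eq_of_le_of_finrank_le hle
    rw [hf, finrank_prod, hL.2]; omega
  rw [he]
  exact hu

theorem lag_iso {V : Type} [AddCommGroup V] [Module ℂ V] [FiniteDimensional ℂ V]
    {b : LinearMap.BilinForm ℂ V} {L : Submodule ℂ (V × V)} (hL : IsLagrangianRel b L)
    {x x' y y' : V} (h : (x, x') ∈ L) (h' : (y, y') ∈ L) : b x y = b x' y' := by
  have := hL.1 _ h _ h'
  rw [BB_app] at this
  exact sub_eq_zero.1 this

theorem exists_map {V : Type} [AddCommGroup V] [Module ℂ V] [FiniteDimensional ℂ V]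
    (b : LinearMap.BilinForm ℂ V) (hsymm : b.IsSymm)
    (V₀ V₀' : Submodule ℂ V) (L : Submodule ℂ (V × V)) (hL : IsLagrangianRel b L)
    (h1 : Submodule.map (LinearMap.fst ℂ V V) L = V₀)
    (h2 : Submodule.map (LinearMap.snd ℂ V V) L = V₀') :
    ∃ φ : (V₀ ⧸ (b.orthogonal V₀).comap V₀.subtype) ≃ₗ[ℂ]
               (V₀' ⧸ (b.orthogonal V₀').comap V₀'.subtype),
      ∀ (x : V₀) (x' : V₀'), ((x : V), (x' : V)) ∈ L →
        φ (Submodule.Quotient.mk x) = Submodule.Quotient.mk x' := by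
  have m1 : ∀ l : L, (LinearMap.fst ℂ V V ∘ₗ L.subtype) l ∈ V₀ := fun l => by
    rw [← h1]; exact ⟨l.1, l.2, rfl⟩
  have m2 : ∀ l : L, (LinearMap.snd ℂ V V ∘ₗ L.subtype) l ∈ V₀' := fun l => by
    rw [← h2]; exact ⟨l.1, l.2, rfl⟩
  let p : L →ₗ[ℂ] V₀ := LinearMap.codRestrict V₀ _ m1
  let q : L →ₗ[ℂ] V₀' := LinearMap.codRestrict V₀' _ m2
  let P := ((b.orthogonal V₀).comap V₀.subtype).mkQ ∘ₗ p
  let Q := ((b.orthogonal V₀').comap V₀'.subtype).mkQ ∘ₗ q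
  have hp : Function.Surjective P := by
    refine (Submodule.mkQ_surjective _).comp ?_
    rintro ⟨x, hx⟩
    have hx2 := hx
    rw [← h1] at hx2
    obtain ⟨l, hl, hlx⟩ := hx2
    exact ⟨⟨l, hl⟩, Subtype.ext hlx⟩
  have hq : Function.Surjective Q := by
    refine (Submodule.mkQ_surjective _).comp ?_
    rintro ⟨x, hx⟩
    have hx2 := hx
    rw [← h2] at hx2
    obtain ⟨l, hl, hlx⟩ := hx2
    exact ⟨⟨l, hl⟩, Subtype.ext hlx⟩
  have hP : ∀ l : L, l ∈ LinearMap.ker P ↔ ∀ m ∈ L, b m.1 l.1.1 = 0 := by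
    intro l
    have : l ∈ LinearMap.ker P ↔ l.1.1 ∈ b.orthogonal V₀ := by
      rw [LinearMap.mem_ker]
      exact Submodule.Quotient.mk_eq_zero _
    rw [this]
    constructor
    · intro h m hm
      exact h _ (m1 ⟨m, hm⟩)
    · intro h x hx
      rw [← h1] at hx
      obtain ⟨m, hm, rfl⟩ := hx
      exact h m hm
  have hQ : ∀ l : L, l ∈ LinearMap.ker Q ↔ ∀ m ∈ L, b m.2 l.1.2 = 0 := by
    intro l
    have : l ∈ LinearMap.ker Q ↔ l.1.2 ∈ b.orthogonal V₀' := by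
      rw [LinearMap.mem_ker]
      exact Submodule.Quotient.mk_eq_zero _
    rw [this]
    constructor
    · intro h m hm
      exact h _ (m2 ⟨m, hm⟩)
    · intro h x hx
      rw [← h2] at hx
      obtain ⟨m, hm, rfl⟩ := hx
      exact h m hm
  have hk : LinearMap.ker P = LinearMap.ker Q := by
    ext l
    rw [hP, hQ]
    refine forall₂_congr fun m hm => ?_
    rw [lag_iso hL (x := m.1) (x' := m.2) (y := l.1.1) (y' := l.1.2) hm l.2]
  let φ := (P.quotKerEquivOfSurjective hp).symm ≪≫ₗ Submodule.quotEquivOfEq _ _ hk ≪≫ₗ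
    Q.quotKerEquivOfSurjective hq
  refine ⟨φ, fun x x' hx => ?_⟩
  have e1 : Submodule.Quotient.mk x =
      (P.quotKerEquivOfSurjective hp) (Submodule.Quotient.mk ⟨_, hx⟩) := rfl
  simp only [φ, LinearEquiv.trans_apply]
  rw [e1, LinearEquiv.symm_apply_apply]
  rfl

theorem rel_zero {V : Type} [AddCommGroup V] [Module ℂ V] [FiniteDimensional ℂ V]
    (b : LinearMap.BilinForm ℂ V) (hsymm : b.IsSymm) (hnd : b.Nondegenerate)
    (V₀' : Submodule ℂ V) (L : Submodule ℂ (V × V)) (hL : IsLagrangianRel b L)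
    (h2 : Submodule.map (LinearMap.snd ℂ V V) L = V₀') (w : V)
    (hw : w ∈ b.orthogonal V₀') : ((0 : V), w) ∈ L := by
  apply lag_max b hsymm hnd L hL
  intro p hp
  have : b p.2 w = 0 := hw _ (by rw [← h2]; exact ⟨p, hp, rfl⟩)
  simp [BB_app, this]

theorem le_of_same {V : Type} [AddCommGroup V] [Module ℂ V] [FiniteDimensional ℂ V]
    (b : LinearMap.BilinForm ℂ V) (hsymm : b.IsSymm) (hnd : b.Nondegenerate)
    (V₀ V₀' : Submodule ℂ V) (L M : Submodule ℂ (V × V))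
    (hM : IsLagrangianRel b M)
    (h1 : Submodule.map (LinearMap.fst ℂ V V) L = V₀)
    (h2 : Submodule.map (LinearMap.snd ℂ V V) L = V₀')
    (h3 : Submodule.map (LinearMap.fst ℂ V V) M = V₀)
    (h4 : Submodule.map (LinearMap.snd ℂ V V) M = V₀')
    (φ : (V₀ ⧸ (b.orthogonal V₀).comap V₀.subtype) →
               (V₀' ⧸ (b.orthogonal V₀').comap V₀'.subtype))
    (hφL : ∀ (x : V₀) (x' : V₀'), ((x : V), (x' : V)) ∈ L →
        φ (Submodule.Quotient.mk x) = Submodule.Quotient.mk x')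
    (hφM : ∀ (x : V₀) (x' : V₀'), ((x : V), (x' : V)) ∈ M →
        φ (Submodule.Quotient.mk x) = Submodule.Quotient.mk x') : L ≤ M := by
  rintro ⟨x, x'⟩ hx
  have hx0 : x ∈ V₀ := by rw [← h1]; exact ⟨_, hx, rfl⟩
  have hx0' : x' ∈ V₀' := by rw [← h2]; exact ⟨_, hx, rfl⟩
  have hx1 := hx0
  rw [← h3] at hx1
  obtain ⟨⟨y, y'⟩, hy, hyx⟩ := hx1
  obtain rfl : y = x := hyx
  have hy' : y' ∈ V₀' := by rw [← h4]; exact ⟨_, hy, rfl⟩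
  have e1 := hφL ⟨y, hx0⟩ ⟨x', hx0'⟩ hx
  have e2 := hφM ⟨y, hx0⟩ ⟨y', hy'⟩ hy
  rw [e1] at e2
  have e3 : x' - y' ∈ b.orthogonal V₀' := (Submodule.Quotient.eq ((b.orthogonal V₀').comap V₀'.subtype)).1 e2
  have := M.add_mem hy (rel_zero b hsymm hnd V₀' M hM h4 _ e3)
  simpa using this

theorem iso_of_map {V : Type} [AddCommGroup V] [Module ℂ V] [FiniteDimensional ℂ V]
    (b : LinearMap.BilinForm ℂ V) (hsymm : b.IsSymm) (hnd : b.Nondegenerate)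
    (V₀ V₀' : Submodule ℂ V) (L : Submodule ℂ (V × V)) (hL : IsLagrangianRel b L)
    (h1 : Submodule.map (LinearMap.fst ℂ V V) L = V₀)
    (h2 : Submodule.map (LinearMap.snd ℂ V V) L = V₀')
    (φ : (V₀ ⧸ (b.orthogonal V₀).comap V₀.subtype) →
               (V₀' ⧸ (b.orthogonal V₀').comap V₀'.subtype))
    (hφ : ∀ (x : V₀) (x' : V₀'), ((x : V), (x' : V)) ∈ L →
        φ (Submodule.Quotient.mk x) = Submodule.Quotient.mk x') :
    ∀ x y : V₀, ∀ x' y' : V₀',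
              φ (Submodule.Quotient.mk x) = Submodule.Quotient.mk x' →
              φ (Submodule.Quotient.mk y) = Submodule.Quotient.mk y' →
              b (x' : V) (y' : V) = b (x : V) (y : V) := by
  have key : ∀ (x : V₀) (x' : V₀'), φ (Submodule.Quotient.mk x) = Submodule.Quotient.mk x' →
      ((x : V), (x' : V)) ∈ L := by
    intro x x' h
    have hx : (x : V) ∈ Submodule.map (LinearMap.fst ℂ V V) L := h1.symm ▸ x.2
    obtain ⟨⟨y, y'⟩, hy, hyx⟩ := hx
    obtain rfl : y = x := hyx
    have hy' : y' ∈ V₀' := by rw [← h2]; exact ⟨_, hy, rfl⟩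
    have e2 := hφ x ⟨y', hy'⟩ hy
    rw [h] at e2
    have e3 : x'.1 - y' ∈ b.orthogonal V₀' := (Submodule.Quotient.eq ((b.orthogonal V₀').comap V₀'.subtype)).1 e2
    have := L.add_mem hy (rel_zero b hsymm hnd V₀' L hL h2 _ e3)
    simpa using this
  intro x y x' y' hx hy
  exact (lag_iso hL (key _ _ hx) (key _ _ hy)).symm

theorem surj_aux {V : Type} [AddCommGroup V] [Module ℂ V] [FiniteDimensional ℂ V]
    (b : LinearMap.BilinForm ℂ V) (hnd : b.Nondegenerate)
    (V₀ V₀' : Submodule ℂ V) (hco' : b.orthogonal V₀' ≤ V₀')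
    (hdim : finrank ℂ V₀ = finrank ℂ V₀')
    (φ : (V₀ ⧸ (b.orthogonal V₀).comap V₀.subtype) ≃ₗ[ℂ]
               (V₀' ⧸ (b.orthogonal V₀').comap V₀'.subtype))
    (hφ : ∀ x y : V₀, ∀ x' y' : V₀',
              φ (Submodule.Quotient.mk x) = Submodule.Quotient.mk x' →
              φ (Submodule.Quotient.mk y) = Submodule.Quotient.mk y' →
              b (x' : V) (y' : V) = b (x : V) (y : V)) :
    ∃ L : Submodule ℂ (V × V), IsLagrangianRel b L ∧
            Submodule.map (LinearMap.fst ℂ V V) L = V₀ ∧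
            Submodule.map (LinearMap.snd ℂ V V) L = V₀' ∧
      ∀ (x : V₀) (x' : V₀'), φ (Submodule.Quotient.mk x) = Submodule.Quotient.mk x' →
        ((x : V), (x' : V)) ∈ L := by
  let D : (V₀ × V₀') →ₗ[ℂ] (V₀' ⧸ (b.orthogonal V₀').comap V₀'.subtype) :=
    (φ.toLinearMap ∘ₗ Submodule.mkQ _) ∘ₗ LinearMap.fst ℂ V₀ V₀' -
      Submodule.mkQ _ ∘ₗ LinearMap.snd ℂ V₀ V₀'
  have hD : ∀ u : V₀ × V₀', u ∈ LinearMap.ker D ↔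
      φ (Submodule.Quotient.mk u.1) = Submodule.Quotient.mk u.2 := by
    intro u
    rw [LinearMap.mem_ker]
    exact sub_eq_zero
  have hDs : Function.Surjective D := by
    intro z
    obtain ⟨z, rfl⟩ := Submodule.mkQ_surjective _ z
    refine ⟨(0, -z), ?_⟩
    simp [D]
  let ι : (V₀ × V₀') →ₗ[ℂ] (V × V) := LinearMap.prodMap V₀.subtype V₀'.subtype
  have hι : Function.Injective ι := by
    rintro ⟨x, x'⟩ ⟨y, y'⟩ h
    have h1 : x.1 = y.1 := congrArg Prod.fst h
    have h2 : x'.1 = y'.1 := congrArg Prod.snd h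
    exact Prod.ext (Subtype.ext h1) (Subtype.ext h2)
  refine ⟨(LinearMap.ker D).map ι, ⟨?_, ?_⟩, ?_, ?_, ?_⟩
  · rintro _ ⟨u, hu, rfl⟩ _ ⟨v, hv, rfl⟩
    have := hφ u.1 v.1 u.2 v.2 ((hD u).1 hu) ((hD v).1 hv)
    rw [BB_app]
    exact sub_eq_zero.2 this.symm
  · rw [← (Submodule.equivMapOfInjective ι hι (LinearMap.ker D)).finrank_eq]
    have r1 := LinearMap.finrank_range_add_finrank_ker D
    rw [LinearMap.range_eq_top.2 hDs, finrank_top, finrank_prod] at r1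
    have r2 := Submodule.finrank_quotient_add_finrank ((b.orthogonal V₀').comap V₀'.subtype)
    have r3 : finrank ℂ ((b.orthogonal V₀').comap V₀'.subtype) = finrank ℂ (b.orthogonal V₀') :=
      (Submodule.comapSubtypeEquivOfLe hco').finrank_eq
    have r4 := LinearMap.BilinForm.finrank_orthogonal hnd V₀'
    have r5 := Submodule.finrank_le V₀'
    omega
  · ext x
    constructor
    · rintro ⟨_, ⟨u, hu, rfl⟩, rfl⟩
      exact u.1.2
    · intro hx
      obtain ⟨z, hz⟩ := Submodule.mkQ_surjective _ (φ (Submodule.Quotient.mk ⟨x, hx⟩))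
      exact ⟨_, ⟨(⟨x, hx⟩, z), (hD _).2 hz.symm, rfl⟩, rfl⟩
  · ext x
    constructor
    · rintro ⟨_, ⟨u, hu, rfl⟩, rfl⟩
      exact u.2.2
    · intro hx
      obtain ⟨z, hz⟩ := Submodule.mkQ_surjective _ (φ.symm (Submodule.Quotient.mk ⟨x, hx⟩))
      refine ⟨_, ⟨(z, ⟨x, hx⟩), (hD _).2 ?_, rfl⟩, rfl⟩
      exact (LinearEquiv.symm_apply_eq φ).1 hz.symm |>.symm
  · intro x x' h
    exact ⟨(x, x'), (hD _).2 h, rfl⟩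

/-- Linear Lagrangian relations `L` with `p₁(L) = V₀`, `p₂(L) = V₀'` correspond
bijectively to isometries `V₀/V₀^⊥ → V₀'/(V₀')^⊥`; the correspondence sends `L` to
the map taking the class of `x` to the class of `x'` whenever `(x, x') ∈ L`. -/
theorem stmt10 {V : Type} [AddCommGroup V] [Module ℂ V] [FiniteDimensional ℂ V]
    (b : LinearMap.BilinForm ℂ V) (hsymm : b.IsSymm) (hnd : b.Nondegenerate)
    (V₀ V₀' : Submodule ℂ V)
    (hco : b.orthogonal V₀ ≤ V₀) (hco' : b.orthogonal V₀' ≤ V₀')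
    (hdim : finrank ℂ V₀ = finrank ℂ V₀') :
    ∃ e : {L : Submodule ℂ (V × V) // IsLagrangianRel b L ∧
            Submodule.map (LinearMap.fst ℂ V V) L = V₀ ∧
            Submodule.map (LinearMap.snd ℂ V V) L = V₀'} ≃
          {φ : (V₀ ⧸ (b.orthogonal V₀).comap V₀.subtype) ≃ₗ[ℂ]
               (V₀' ⧸ (b.orthogonal V₀').comap V₀'.subtype) //
            ∀ x y : V₀, ∀ x' y' : V₀',
              φ (Submodule.Quotient.mk x) = Submodule.Quotient.mk x' →
              φ (Submodule.Quotient.mk y) = Submodule.Quotient.mk y' →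
              b (x' : V) (y' : V) = b (x : V) (y : V)},
      ∀ (L : {L : Submodule ℂ (V × V) // IsLagrangianRel b L ∧
              Submodule.map (LinearMap.fst ℂ V V) L = V₀ ∧
              Submodule.map (LinearMap.snd ℂ V V) L = V₀'})
        (x : V₀) (x' : V₀'), ((x : V), (x' : V)) ∈ L.1 →
          (e L).1 (Submodule.Quotient.mk x) = Submodule.Quotient.mk x' := by
  classical
  choose f hf using fun L : {L : Submodule ℂ (V × V) // IsLagrangianRel b L ∧
            Submodule.map (LinearMap.fst ℂ V V) L = V₀ ∧
            Submodule.map (LinearMap.snd ℂ V V) L = V₀'} =>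
    exists_map b hsymm V₀ V₀' L.1 L.2.1 L.2.2.1 L.2.2.2
  refine ⟨Equiv.ofBijective (fun L => ⟨f L, iso_of_map b hsymm hnd V₀ V₀' L.1 L.2.1 L.2.2.1
    L.2.2.2 (f L) (hf L)⟩) ⟨?_, ?_⟩, fun L x x' h => hf L x x' h⟩
  · intro L M h
    have h' : f L = f M := congrArg Subtype.val h
    have hM := hf M
    rw [← h'] at hM
    apply Subtype.ext
    apply le_antisymm
    · exact le_of_same b hsymm hnd V₀ V₀' L.1 M.1 M.2.1 L.2.2.1 L.2.2.2 M.2.2.1 M.2.2.2 (f L)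
        (hf L) hM
    · exact le_of_same b hsymm hnd V₀ V₀' M.1 L.1 L.2.1 M.2.2.1 M.2.2.2 L.2.2.1 L.2.2.2 (f L)
        hM (hf L)
  · rintro ⟨φ, hφ⟩
    obtain ⟨L, hL, h1, h2, h3⟩ := surj_aux b hnd V₀ V₀' hco' hdim φ hφ
    refine ⟨⟨L, hL, h1, h2⟩, Subtype.ext ?_⟩
    apply LinearEquiv.ext
    intro z
    obtain ⟨x, rfl⟩ := Submodule.mkQ_surjective _ z
    obtain ⟨x', hx'⟩ := Submodule.mkQ_surjective _ (φ (Submodule.Quotient.mk x))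
    exact (hf ⟨L, hL, h1, h2⟩ x x' (h3 x x' hx'.symm)).trans hx'
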